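/- (Frucht) For a finite abelian group Γ, the following are equivalent: (i) Γ has a projective unitary representation on some complex Hilbert space which is both irreducible and projectively faithful; (ii) there exists a finite abelian group L such that Γ is isomorphic to the direct product L × L. -/

import Mathlib

/-- A projective unitary representation: a map into the unitary operators sending `1` to `id`
whose composition with the quotient by the circle is a homomorphism. -/
def IsProjUnitaryRep {G : Type*} [Group G] {H : Type*} [NormedAddCommGroup H]
    [InnerProductSpace ℂ H] [CompleteSpace H] (π : G → (H →L[ℂ] H)) : Prop :=
  (∀ x, π x ∈ unitary (H →L[ℂ] H)) ∧ π 1 = 1 ∧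
    ∀ x y, ∃ z : Circle, π x * π y = (z : ℂ) • π (x * y)

/-- The projective kernel of a projective representation. -/
def ProjKer {G : Type*} [Group G] {H : Type*} [NormedAddCommGroup H]
    [InnerProductSpace ℂ H] [CompleteSpace H] (π : G → (H →L[ℂ] H)) : Set G :=
  {x | ∃ z : Circle, π x = (z : ℂ) • (1 : H →L[ℂ] H)}

/-- Projective faithfulness. -/
def PFaithful {G : Type*} [Group G] {H : Type*} [NormedAddCommGroup H]
    [InnerProductSpace ℂ H] [CompleteSpace H] (π : G → (H →L[ℂ] H)) : Prop :=
  ∀ x, x ∈ ProjKer π → x = 1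

/-- Irreducibility: the only closed invariant subspaces are `⊥` and `⊤`. -/
def IsIrreducibleRep {G : Type*} {H : Type*} [NormedAddCommGroup H]
    [InnerProductSpace ℂ H] [CompleteSpace H] (π : G → (H →L[ℂ] H)) : Prop :=
  ∀ K : Submodule ℂ H, IsClosed (K : Set H) → (∀ x, ∀ v ∈ K, π x v ∈ K) → K = ⊥ ∨ K = ⊤

/-- An (ordinary) unitary representation. -/
def IsUnitaryRep {G : Type*} [Group G] {H : Type*} [NormedAddCommGroup H]
    [InnerProductSpace ℂ H] [CompleteSpace H] (π : G → (H →L[ℂ] H)) : Prop :=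
  (∀ x, π x ∈ unitary (H →L[ℂ] H)) ∧ π 1 = 1 ∧ ∀ x y, π (x * y) = π x * π y

/-- A multiplier (2-cocycle) with values in the circle group. -/
def IsMultiplier {G : Type*} [Group G] (ζ : G → G → Circle) : Prop :=
  (∀ x, ζ 1 x = 1) ∧ (∀ x, ζ x 1 = 1) ∧
    ∀ x y z, ζ x y * ζ (x * y) z = ζ x (y * z) * ζ y z

/-- A normalised multiplier. -/
def IsNormalised {G : Type*} [Group G] (ζ : G → G → Circle) : Prop :=
  ∀ x : G, ζ x x⁻¹ = 1

/-- A ζ-representation of `G`. -/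
def IsZetaRep {G : Type*} [Group G] {H : Type*} [NormedAddCommGroup H]
    [InnerProductSpace ℂ H] [CompleteSpace H] (ζ : G → G → Circle)
    (π : G → (H →L[ℂ] H)) : Prop :=
  (∀ x, π x ∈ unitary (H →L[ℂ] H)) ∧ π 1 = 1 ∧
    ∀ x y, π x * π y = ((ζ x y : ℂ)) • π (x * y)

/-- A ζ-representation of a subgroup `N` of `G` (with respect to the restriction of ζ). -/
def IsZetaRepOn {G : Type*} [Group G] {H : Type*} [NormedAddCommGroup H]
    [InnerProductSpace ℂ H] [CompleteSpace H] (ζ : G → G → Circle) (N : Subgroup G)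
    (σ : N → (H →L[ℂ] H)) : Prop :=
  (∀ x, σ x ∈ unitary (H →L[ℂ] H)) ∧ σ 1 = 1 ∧
    ∀ x y : N, σ x * σ y = ((ζ (x : G) (y : G) : ℂ)) • σ (x * y)

open scoped Classical in
/-- The conjugate `σ^γ` of a projective representation `σ` of a (normal) subgroup `N`:
`σ^γ(x) = ζ(γ,x)·ζ(γx,γ⁻¹)·σ(γxγ⁻¹)`. -/
noncomputable def conjRep {G : Type*} [Group G] {H : Type*} [NormedAddCommGroup H]
    [InnerProductSpace ℂ H] [CompleteSpace H] (ζ : G → G → Circle) (N : Subgroup G)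
    (σ : N → (H →L[ℂ] H)) (γ : G) (x : N) : H →L[ℂ] H :=
  if h : γ * (x : G) * γ⁻¹ ∈ N then
    ((ζ γ (x : G) : ℂ) * (ζ (γ * (x : G)) γ⁻¹ : ℂ)) • σ ⟨γ * (x : G) * γ⁻¹, h⟩
  else 1

/-- `σ` is Γ-P-faithful: the projective Γ-kernel
`{x ∈ N : ∃ z ∈ T, σ^γ(x) = z·id for all γ}` is trivial. -/
def GammaPFaithful {G : Type*} [Group G] {H : Type*} [NormedAddCommGroup H]
    [InnerProductSpace ℂ H] [CompleteSpace H] (ζ : G → G → Circle) (N : Subgroup G)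
    (σ : N → (H →L[ℂ] H)) : Prop :=
  ∀ x : N, (∃ z : Circle, ∀ γ : G, conjRep ζ N σ γ x = (z : ℂ) • (1 : H →L[ℂ] H)) → x = 1

/-- A finite foot of `G`: a finite minimal (nontrivial) normal subgroup. -/
def IsFiniteFoot {G : Type*} [Group G] (N : Subgroup G) : Prop :=
  N.Normal ∧ N ≠ ⊥ ∧ (∀ M : Subgroup G, M.Normal → M ≠ ⊥ → M ≤ N → M = N) ∧ Finite N

/-- The minisocle: the subgroup generated by all finite feet. -/
def minisocle (G : Type*) [Group G] : Subgroup G :=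
  ⨆ (N : Subgroup G) (_ : IsFiniteFoot N), N

/-- Property (Fab): the normal subgroup generated by any single conjugacy class has finite
abelianisation. -/
def PropertyFab (G : Type*) [Group G] : Prop :=
  ∀ g : G, Finite (Abelianization (Subgroup.normalClosure ({g} : Set G)))

universe u

section AlternatingForm

/-- In a finite abelian group with a nondegenerate pairing into the circle, some value of the
pairing has order equal to the exponent of the group. -/
lemma exists_orderOf_pairing_eq_exponent {G : Type*} [CommGroup G] [Finite G]
    (b : G →* G →* Circle) (hnd : ∀ x, (∀ y, b x y = 1) → x = 1) :
    ∃ x y, orderOf (b x y) = Monoid.exponent G := by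
  obtain ⟨x, hx⟩ := Monoid.exists_orderOf_eq_exponent (Monoid.ExponentExists.of_finite (G := G))
  have : Finite (b x).range := Set.finite_range (b x)
  obtain ⟨⟨_, y, rfl⟩, hw⟩ := Monoid.exists_orderOf_eq_exponent
    (Monoid.ExponentExists.of_finite (G := (b x).range))
  rw [← Subgroup.orderOf_coe] at hw
  refine ⟨x, y, Nat.dvd_antisymm ?_ ?_⟩
  · exact (orderOf_map_dvd (b x) y).trans (Monoid.order_dvd_exponent y)
  · rw [← hx, hw]
    refine orderOf_dvd_of_pow_eq_one (hnd _ fun z => ?_)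
    have := Monoid.pow_exponent_eq_one (⟨b x z, z, rfl⟩ : (b x).range)
    rw [map_pow, MonoidHom.pow_apply]
    exact congrArg Subtype.val this

lemma Circle.exists_zpow_eq_of_orderOf {n : ℕ} (hn : n ≠ 0) {ζ w : Circle} (hζ : orderOf ζ = n)
    (hw : w ^ n = 1) : ∃ j : ℤ, ζ ^ j = w := by
  have : NeZero n := ⟨hn⟩
  have hprim : IsPrimitiveRoot (ζ : ℂ) n := by
    rw [← hζ]
    exact (IsPrimitiveRoot.orderOf ζ).map_of_injective (f := Circle.coeHom) Circle.coe_injective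
  obtain ⟨i, -, hi⟩ := hprim.eq_pow_of_pow_eq_one
    (show (w : ℂ) ^ n = 1 by rw [← Circle.coe_pow, hw, Circle.coe_one])
  exact ⟨i, Circle.coe_injective (by simpa using hi)⟩

lemma pairing_mul_pairing_swap {G : Type*} [CommGroup G] (b : G →* G →* Circle)
    (halt : ∀ x, b x x = 1) (x y : G) : b x y * b y x = 1 := by
  simpa [halt] using halt (x * y)

lemma pairing_swap {G : Type*} [CommGroup G] (b : G →* G →* Circle)
    (halt : ∀ x, b x x = 1) (x y : G) : b y x = (b x y)⁻¹ :=
  (inv_eq_of_mul_eq_one_right (pairing_mul_pairing_swap b halt x y)).symm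

/-- A finite abelian group carrying a nondegenerate alternating bicharacter is the square of a
group. -/
theorem exists_mulEquiv_prod_self_of_alternating {G : Type u} [CommGroup G] [Finite G]
    (b : G →* G →* Circle) (halt : ∀ x, b x x = 1) (hnd : ∀ x, (∀ y, b x y = 1) → x = 1) :
    ∃ (L : Type u) (_ : CommGroup L) (_ : Finite L), Nonempty (G ≃* L × L) := by
  induction hN : Nat.card G using Nat.strong_induction_on generalizing G with
  | _ N ih =>
  subst hN
  rcases subsingleton_or_nontrivial G with hG | hG
  · exact ⟨G, inferInstance, inferInstance,
      ⟨{ toFun := fun g => (g, g), invFun := Prod.fst, left_inv := fun _ => rfl,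
         right_inv := fun _ => Subsingleton.elim _ _, map_mul' := fun _ _ => rfl }⟩⟩
  obtain ⟨x, y, hxy⟩ := exists_orderOf_pairing_eq_exponent b hnd
  set n := Monoid.exponent G with hn
  have hn0 : n ≠ 0 := Monoid.exponent_ne_zero_of_finite
  set ζ := b x y with hζ
  have hyx : b y x = ζ⁻¹ := pairing_swap b halt x y
  have hxo : orderOf x = n := by
    refine Nat.dvd_antisymm (Monoid.order_dvd_exponent x) (hxy ▸ orderOf_dvd_of_pow_eq_one ?_)
    rw [hζ, ← MonoidHom.pow_apply, ← map_pow, pow_orderOf_eq_one]; simp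
  have hyo : orderOf y = n := by
    refine Nat.dvd_antisymm (Monoid.order_dvd_exponent y) (hxy ▸ orderOf_dvd_of_pow_eq_one ?_)
    rw [hζ, ← map_pow, pow_orderOf_eq_one]; simp
  -- the orthogonal complement of the hyperbolic plane spanned by `x` and `y`
  let P : Subgroup G := (b x).ker ⊓ (b y).ker
  have hPx (p : P) : b x p = 1 := p.2.1
  have hPy (p : P) : b y p = 1 := p.2.2
  let φ : (Subgroup.zpowers x × Subgroup.zpowers y) × P →* G :=
    ((Subgroup.zpowers x).subtype.coprod (Subgroup.zpowers y).subtype).coprod P.subtype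
  have hφ (i j : ℤ) (p : P) :
      φ ((⟨x ^ i, i, rfl⟩, ⟨y ^ j, j, rfl⟩), p) = x ^ i * y ^ j * p := rfl
  have hbx (i j : ℤ) (p : P) : b x (x ^ i * y ^ j * p) = ζ ^ j := by
    simp [halt, hPx, hζ]
  have hby (i j : ℤ) (p : P) : b y (x ^ i * y ^ j * p) = ζ ^ (-i) := by
    simp [halt, hPy, hyx]
  have hinj : Function.Injective φ := by
    rw [injective_iff_map_eq_one]
    rintro ⟨⟨⟨_, i, rfl⟩, ⟨_, j, rfl⟩⟩, p⟩ h
    change x ^ i * y ^ j * (p : G) = 1 at h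
    have hj : y ^ j = 1 := by
      rw [← orderOf_dvd_iff_zpow_eq_one, hyo, ← hxy, orderOf_dvd_iff_zpow_eq_one,
        ← hbx i j p, h, map_one]
    have hi : x ^ i = 1 := by
      rw [← orderOf_dvd_iff_zpow_eq_one, hxo, ← hxy, ← dvd_neg, orderOf_dvd_iff_zpow_eq_one,
        ← hby i j p, h, map_one]
    have hp : (p : G) = 1 := by simpa [hi, hj] using h
    ext <;> simp [hi, hj, hp]
  have hsurj : Function.Surjective φ := by
    intro z
    have key (u : G) : ∃ j : ℤ, ζ ^ j = b u z :=
      Circle.exists_zpow_eq_of_orderOf hn0 hxy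
        (by rw [← map_pow, Monoid.pow_exponent_eq_one, map_one])
    obtain ⟨j, hj⟩ := key x
    obtain ⟨i, hi⟩ := key y
    have hmem : (x ^ (-i) * y ^ j)⁻¹ * z ∈ P := by
      constructor
      · simp [halt, ← hζ, hj]
      · simp [halt, hyx, ← hi]
    exact ⟨((⟨x ^ (-i), -i, rfl⟩, ⟨y ^ j, j, rfl⟩), ⟨_, hmem⟩), by rw [hφ, mul_inv_cancel_left]⟩
  let e := MulEquiv.ofBijective φ ⟨hinj, hsurj⟩
  have hcard : Nat.card P < Nat.card G := by
    refine lt_of_le_of_ne (Nat.card_le_card_of_injective _ P.subtype_injective) fun h => ?_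
    have hx1 : x ∈ P := (Subgroup.eq_top_of_card_eq P h) ▸ Subgroup.mem_top x
    have h1 : ζ = 1 := by simpa [hyx] using hx1.2
    have : n = 1 := by rw [← hxy, h1, orderOf_one]
    exact not_subsingleton G (Monoid.exp_eq_one_iff.mp this)
  have hndP (p : P) (hp : ∀ q : P, b p q = 1) : p = 1 := by
    refine Subtype.ext (hnd p fun z => ?_)
    obtain ⟨⟨⟨⟨_, i, rfl⟩, ⟨_, j, rfl⟩⟩, q⟩, rfl⟩ := hsurj z
    change b p (x ^ i * y ^ j * q) = 1
    simp [hp q, pairing_swap b halt x p, pairing_swap b halt y p, hPx, hPy]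
  obtain ⟨L, _, _, ⟨f⟩⟩ := ih _ hcard (((MonoidHom.compHom' P.subtype).comp b).comp P.subtype)
    (fun p => halt p) hndP rfl
  let g : Subgroup.zpowers y ≃* Subgroup.zpowers x :=
    mulEquivOfCyclicCardEq (by rw [Nat.card_zpowers, Nat.card_zpowers, hxo, hyo])
  exact ⟨Subgroup.zpowers x × L, inferInstance, inferInstance,
    ⟨e.symm.trans ((MulEquiv.prodCongr (MulEquiv.prodCongr (MulEquiv.refl _) g) f).trans
      (MulEquiv.prodProdProdComm _ _ _ _))⟩⟩

end AlternatingForm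

section Commutator

variable {G : Type*} [CommGroup G] {H : Type*} [NormedAddCommGroup H] [InnerProductSpace ℂ H]
  [CompleteSpace H] {π : G → (H →L[ℂ] H)}

lemma IsProjUnitaryRep.exists_commutator (hπ : IsProjUnitaryRep π) (x y : G) :
    ∃ z : Circle, π x * π y = (z : ℂ) • (π y * π x) := by
  obtain ⟨z, hz⟩ := hπ.2.2 x y
  obtain ⟨w, hw⟩ := hπ.2.2 y x
  refine ⟨z / w, ?_⟩
  rw [hz, hw, mul_comm y x, smul_smul, Circle.coe_div, div_mul_cancel₀ _ w.coe_ne_zero]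

/-- The scalar by which `π x` and `π y` fail to commute. -/
noncomputable def IsProjUnitaryRep.commutator (hπ : IsProjUnitaryRep π) (x y : G) : Circle :=
  (hπ.exists_commutator x y).choose

lemma IsProjUnitaryRep.mul_eq_commutator_smul (hπ : IsProjUnitaryRep π) (x y : G) :
    π x * π y = (hπ.commutator x y : ℂ) • (π y * π x) :=
  (hπ.exists_commutator x y).choose_spec

lemma IsProjUnitaryRep.mul_ne_zero [Nontrivial H] (hπ : IsProjUnitaryRep π) (x y : G) :
    π x * π y ≠ 0 :=
  (Unitary.toUnits ⟨π x * π y, mul_mem (hπ.1 x) (hπ.1 y)⟩).ne_zero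

lemma IsProjUnitaryRep.commutator_eq [Nontrivial H] (hπ : IsProjUnitaryRep π) {x y : G}
    {z : Circle} (h : π x * π y = (z : ℂ) • (π y * π x)) : hπ.commutator x y = z := by
  rw [hπ.mul_eq_commutator_smul] at h
  exact Circle.coe_injective (smul_left_injective ℂ (hπ.mul_ne_zero y x) h)

lemma IsProjUnitaryRep.commutator_self [Nontrivial H] (hπ : IsProjUnitaryRep π) (x : G) :
    hπ.commutator x x = 1 :=
  hπ.commutator_eq (by simp)

lemma IsProjUnitaryRep.commutator_swap [Nontrivial H] (hπ : IsProjUnitaryRep π) (x y : G) :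
    hπ.commutator y x = (hπ.commutator x y)⁻¹ :=
  hπ.commutator_eq (by
    rw [hπ.mul_eq_commutator_smul x y, smul_smul, ← Circle.coe_mul, inv_mul_cancel,
      Circle.coe_one, one_smul])

lemma IsProjUnitaryRep.commutator_mul_left [Nontrivial H] (hπ : IsProjUnitaryRep π)
    (x x' y : G) :
    hπ.commutator (x * x') y = hπ.commutator x y * hπ.commutator x' y := by
  refine hπ.commutator_eq ?_
  obtain ⟨z, hz⟩ := hπ.2.2 x x'
  refine smul_right_injective _ z.coe_ne_zero ?_
  change (z : ℂ) • (π (x * x') * π y) = (z : ℂ) • _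
  rw [smul_comm, ← smul_mul_assoc, ← mul_smul_comm, ← hz, mul_assoc,
    hπ.mul_eq_commutator_smul x' y, mul_smul_comm, ← mul_assoc, hπ.mul_eq_commutator_smul x y,
    smul_mul_assoc, smul_smul, mul_assoc, Circle.coe_mul, mul_comm (hπ.commutator x y : ℂ)]

/-- The commutator scalars assemble to a bicharacter. -/
noncomputable def IsProjUnitaryRep.commutatorHom [Nontrivial H] (hπ : IsProjUnitaryRep π) :
    G →* G →* Circle :=
  MonoidHom.mk' (fun x => MonoidHom.mk' (hπ.commutator x) fun y y' => by
      rw [hπ.commutator_swap (y * y') x, hπ.commutator_mul_left, mul_inv, ← hπ.commutator_swap,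
        ← hπ.commutator_swap])
    fun x x' => MonoidHom.ext fun y => hπ.commutator_mul_left x x' y

lemma IsIrreducibleRep.finiteDimensional [Finite G] (hπ : IsProjUnitaryRep π)
    (hirr : IsIrreducibleRep π) : FiniteDimensional ℂ H := by
  rcases subsingleton_or_nontrivial H with hH | hH
  · infer_instance
  obtain ⟨v, hv⟩ := exists_ne (0 : H)
  let K := Submodule.span ℂ (Set.range fun x => π x v)
  have : FiniteDimensional ℂ K := FiniteDimensional.span_of_finite ℂ (Set.finite_range _)
  have hK (x : G) (w : H) (hw : w ∈ K) : π x w ∈ K := by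
    induction hw using Submodule.span_induction with
    | mem w hw =>
      obtain ⟨y, rfl⟩ := hw
      obtain ⟨z, hz⟩ := hπ.2.2 x y
      change (π x * π y) v ∈ K
      rw [hz]
      exact K.smul_mem _ (Submodule.subset_span ⟨x * y, rfl⟩)
    | zero => simp
    | add a b _ _ ha hb => rw [map_add]; exact K.add_mem ha hb
    | smul c a _ ha => rw [map_smul]; exact K.smul_mem c ha
  rcases hirr K K.closed_of_finiteDimensional hK with h | h
  · have hvK : v ∈ K := Submodule.subset_span ⟨1, by simp [hπ.2.1]⟩
    exact absurd ((Submodule.mem_bot ℂ).mp (h ▸ hvK)) hv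
  · rw [h] at this
    exact Submodule.topEquiv.finiteDimensional

/-- Schur's lemma for irreducible projective representations of finite abelian groups. -/
lemma IsIrreducibleRep.mem_projKer_of_commute [Finite G] [Nontrivial H]
    (hπ : IsProjUnitaryRep π) (hirr : IsIrreducibleRep π) {x : G}
    (hx : ∀ y, π x * π y = π y * π x) : x ∈ ProjKer π := by
  have := hirr.finiteDimensional hπ
  obtain ⟨c, hc⟩ := Module.End.exists_eigenvalue (π x : H →ₗ[ℂ] H)
  let K := Module.End.eigenspace (π x : H →ₗ[ℂ] H) c
  have hK (v : H) : v ∈ K ↔ π x v = c • v := Module.End.mem_eigenspace_iff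
  have htop : K = ⊤ := by
    refine (hirr K K.closed_of_finiteDimensional fun y v hv => ?_).resolve_left hc
    rw [hK] at hv ⊢
    change (π x * π y) v = _
    rw [hx, mul_apply_eq_comp, hv, map_smul]
  have hsc (v : H) : π x v = c • v := (hK v).mp (htop ▸ Submodule.mem_top)
  obtain ⟨v, hv⟩ := exists_ne (0 : H)
  have hnorm : ‖c‖ = 1 := by
    have h := Unitary.norm_map ⟨π x, hπ.1 x⟩ v
    change ‖π x v‖ = ‖v‖ at h
    rw [hsc, norm_smul] at h
    exact mul_right_cancel₀ (norm_ne_zero_iff.mpr hv) (by rw [h, one_mul])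
  exact ⟨⟨c, mem_sphere_zero_iff_norm.mpr hnorm⟩, ContinuousLinearMap.ext hsc⟩

end Commutator

section Weyl

variable {L : Type*} [CommGroup L] [Fintype L]

/-- The Weyl operator on `ℂ^L`: translation by `a` followed by multiplication by `χ`. -/
noncomputable def weylOperator (a : L) (χ : L →* Circle) :
    EuclideanSpace ℂ L ≃ₗᵢ[ℂ] EuclideanSpace ℂ L where
  toFun f := WithLp.toLp 2 fun t => (χ t : ℂ) * f (a⁻¹ * t)
  invFun f := WithLp.toLp 2 fun t => ((χ (a * t))⁻¹ : Circle) * f (a * t)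
  map_add' f g := by ext t; simp [mul_add]
  map_smul' c f := by ext t; simp [mul_left_comm]
  left_inv f := by
    ext t
    simp [-Circle.coe_mul, -Circle.coe_inv, -map_mul, ← mul_assoc, ← Circle.coe_mul]
  right_inv f := by
    ext t
    simp [-Circle.coe_mul, -Circle.coe_inv, -map_mul, ← mul_assoc, ← Circle.coe_mul]
  norm_map' f := by
    simp only [EuclideanSpace.norm_eq]
    congr 1
    exact Fintype.sum_equiv (Equiv.mulLeft a⁻¹) _ _ fun t => by simp [Circle.norm_coe]

lemma weylOperator_apply (a : L) (χ : L →* Circle) (f : EuclideanSpace ℂ L) (t : L) :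
    weylOperator a χ f t = χ t * f (a⁻¹ * t) := rfl

/-- The Weyl representation of `L × L^`. -/
noncomputable def weylRep (p : L × (L →* Circle)) :
    EuclideanSpace ℂ L →L[ℂ] EuclideanSpace ℂ L :=
  (weylOperator p.1 p.2).toContinuousLinearEquiv

lemma weylRep_apply (p : L × (L →* Circle)) (f : EuclideanSpace ℂ L) (t : L) :
    weylRep p f t = p.2 t * f (p.1⁻¹ * t) := rfl

lemma isProjUnitaryRep_weylRep : IsProjUnitaryRep (weylRep (L := L)) := by
  refine ⟨fun p => (Unitary.linearIsometryEquiv.symm (weylOperator p.1 p.2)).2, ?_,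
    fun p q => ⟨(q.2 p.1)⁻¹, ?_⟩⟩
  · ext f t
    simp [weylRep_apply]
  · ext f t
    simp [weylRep_apply, mul_assoc, mul_left_comm]

lemma pFaithful_weylRep : PFaithful (weylRep (L := L)) := by
  classical
  rintro ⟨a, χ⟩ ⟨z, hz⟩
  have h (f : EuclideanSpace ℂ L) (t : L) : (χ t : ℂ) * f (a⁻¹ * t) = z * f t := by
    rw [← weylRep_apply (a, χ), hz]; rfl
  have ha : a = 1 := by
    by_contra hne
    have := h (EuclideanSpace.single 1 1) a
    simp [hne] at this
  subst ha
  have hχ (t : L) : χ t = z := by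
    have := h (EuclideanSpace.single t 1) t
    exact Circle.coe_injective (by simpa using this)
  have hχ1 : χ = 1 := MonoidHom.ext fun t => by
    rw [hχ t, ← hχ 1, map_one, MonoidHom.one_apply]
  rw [hχ1, Prod.mk_one_one]

lemma finite_circle_characters : Finite (L →* Circle) ∧ Nonempty ((L →* Circle) ≃* L) := by
  obtain ⟨e⟩ := CommGroup.monoidHom_mulEquiv_of_hasEnoughRootsOfUnity L Circle
  have e' : (L →* Circle) ≃* L := (toUnits.monoidHomCongrRight).trans e
  exact ⟨Finite.of_equiv _ e'.symm.toEquiv, ⟨e'⟩⟩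

lemma sum_circle_characters_apply [Fintype (L →* Circle)] {t : L} (ht : t ≠ 1) :
    ∑ χ : L →* Circle, (χ t : ℂ) = 0 := by
  refine sum_hom_units_eq_zero (Circle.coeHom.comp (MonoidHom.eval t)) fun h => ?_
  obtain ⟨φ, hφ⟩ := CommGroup.exists_apply_ne_one_of_hasEnoughRootsOfUnity L Circle ht
  have := DFunLike.congr_fun h ((toUnits.symm : Circleˣ ≃* Circle).toMonoidHom.comp φ)
  exact hφ (Units.ext (Circle.coe_injective this))

lemma isIrreducibleRep_weylRep : IsIrreducibleRep (weylRep (L := L)) := by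
  classical
  intro K _ hK
  refine or_iff_not_imp_left.mpr fun hne => ?_
  obtain ⟨f, hf, hf0⟩ := K.exists_mem_ne_zero_of_ne_bot hne
  obtain ⟨s, hs⟩ : ∃ s, f s ≠ 0 := by
    by_contra! h
    exact hf0 (PiLp.ext h)
  have := (finite_circle_characters (L := L)).1
  have := Fintype.ofFinite (L →* Circle)
  -- averaging over the characters isolates the coordinate `s`
  have hsum : ∑ χ : L →* Circle, (χ s⁻¹ : ℂ) • weylRep (1, χ) f =
      (Fintype.card (L →* Circle) * f s : ℂ) • EuclideanSpace.single s 1 := by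
    ext t
    simp only [WithLp.ofLp_sum, Finset.sum_apply, PiLp.smul_apply, weylRep_apply, smul_eq_mul,
      inv_one, one_mul, ← mul_assoc, ← Circle.coe_mul, ← map_mul, ← Finset.sum_mul]
    by_cases hts : t = s
    · subst hts; simp
    · rw [sum_circle_characters_apply (by rwa [Ne, inv_mul_eq_one, eq_comm])]
      simp [hts]
  have hsingle : EuclideanSpace.single s (1 : ℂ) ∈ K := by
    refine (K.smul_mem_iff (mul_ne_zero (Nat.cast_ne_zero.mpr Fintype.card_ne_zero) hs)).mp
      (hsum ▸ K.sum_mem fun χ _ => K.smul_mem _ (hK _ f hf))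
  have hall (t : L) : EuclideanSpace.single t (1 : ℂ) ∈ K := by
    convert hK (t * s⁻¹, 1) _ hsingle using 1
    ext u
    simp [weylRep_apply, inv_mul_eq_iff_eq_mul, mul_assoc]
  refine eq_top_iff.mpr fun g _ => ?_
  rw [← (EuclideanSpace.basisFun L ℂ).sum_repr g]
  exact K.sum_mem fun t _ => K.smul_mem _ (by simpa using hall t)

end Weyl

/-- Frucht's theorem: a finite abelian group has an irreducible projectively faithful
projective unitary representation iff it is isomorphic to `L × L` for some finite abelian
group `L`. -/
theorem stmt_19 (Γ : Type) [CommGroup Γ] [Finite Γ] :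
    (∃ (H : Type) (_ : NormedAddCommGroup H) (_ : InnerProductSpace ℂ H) (_ : CompleteSpace H)
        (π : Γ → (H →L[ℂ] H)),
        IsProjUnitaryRep π ∧ IsIrreducibleRep π ∧ PFaithful π) ↔
      ∃ (L : Type) (_ : CommGroup L) (_ : Finite L), Nonempty (Γ ≃* L × L) := by
  constructor
  · rintro ⟨H, _, _, _, π, hπ, hirr, hfaith⟩
    rcases subsingleton_or_nontrivial H with hH | hH
    · refine exists_mulEquiv_prod_self_of_alternating 1 (fun _ => rfl)
        fun x _ => hfaith x ⟨1, Subsingleton.elim _ _⟩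
    · refine exists_mulEquiv_prod_self_of_alternating hπ.commutatorHom hπ.commutator_self
        fun x hx => hfaith x (hirr.mem_projKer_of_commute hπ fun y => ?_)
      have hxy : hπ.commutator x y = 1 := hx y
      rw [hπ.mul_eq_commutator_smul, hxy, Circle.coe_one, one_smul]
  · rintro ⟨L, _, _, ⟨e⟩⟩
    have := Fintype.ofFinite L
    obtain ⟨d⟩ := (finite_circle_characters (L := L)).2
    let E : Γ ≃* L × (L →* Circle) := e.trans (MulEquiv.prodCongr (MulEquiv.refl L) d.symm)
    refine ⟨EuclideanSpace ℂ L, inferInstance, inferInstance, inferInstance,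
      fun x => weylRep (E x), ⟨fun x => isProjUnitaryRep_weylRep.1 _, ?_, fun x y => ?_⟩,
      fun K hcl hK => ?_, fun x hx => ?_⟩
    · change weylRep (E 1) = 1
      rw [map_one]; exact isProjUnitaryRep_weylRep.2.1
    · simpa only [map_mul] using isProjUnitaryRep_weylRep.2.2 (E x) (E y)
    · exact isIrreducibleRep_weylRep K hcl fun p v hv => by
        simpa using hK (E.symm p) v hv
    · exact E.map_eq_one_iff.mp (pFaithful_weylRep _ hx)
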